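/- Maintenance of centrality along one IPM step with an approximate inverse: Let n ≥ 10, d ≥ 1, t₁ > 0, κ ≥ 1, let x, s ∈ ℝⁿ have positive entries, and let A ∈ ℝ^{n×d} have full column rank. Let X, S be the diagonal matrices of x, s and assume ‖X‖_F, ‖X⁻¹‖_F, ‖S‖_F, ‖S⁻¹‖_F, ‖A‖_F ≤ κ. Set μ₁ := x⊙s and δ_μ := −(1/2)·(μ₁ − t₁·𝟙), and assume ‖(μ₁ − t₁·𝟙)/t₁‖₂ ≤ 0.1. Let D⁻¹ ∈ ℝ^{d×d} be a matrix with ‖(AᵀXS⁻¹A)⁻¹ − D⁻¹‖_F ≤ ε, where ε ≥ 0 satisfies κ⁴·ε ≤ 0.1. Define P̃ := X^{1/2} S^{−1/2} A D⁻¹ Aᵀ S^{−1/2} X^{1/2}, δ_x := X^{1/2} S^{−1/2} (I − P̃) X^{−1/2} S^{−1/2} δ_μ, δ_s := X^{−1/2} S^{1/2} P̃ X^{−1/2} S^{−1/2} δ_μ, μ₂ := (x + δ_x)⊙(s + δ_s), and t₂ := (1 − 1/(1000·√n))·t₁. Then ‖(μ₂ − t₂·𝟙)/t₂‖₂ ≤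 0.1. -/

import Mathlib

/-!
Write `v = X^{-1/2} S^{-1/2} δμ`, `p = P̃ v` and `q = v - p`. The first-order terms of the step recombine
exactly, whatever `P̃` is, so that `μ₂ = μ₁ + δμ + q ⊙ p` and hence
`μ₂ - t₂ 𝟙 = (μ₁ - t₁ 𝟙) / 2 + (t₁ - t₂) 𝟙 + q ⊙ p`. Relative to `t₁`, the three terms have Euclidean norm
at most `0.05`, `0.001` and `‖q‖ ‖p‖ / t₁`.

The quadratic term is controlled by comparing `P̃` with `P = B (BᵀB)⁻¹ Bᵀ`, `B = X^{1/2} S^{-1/2} A`,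
an orthogonal projection, for which `P v` and `v - P v` are no longer than `v`
(`vecNorm2_proj_le`). The error `P - P̃` maps `v` to a vector of length at most `κ⁴ ε ‖v‖ ≤ 0.1 ‖v‖`:
the two outer factors `X^{1/2} S^{-1/2}` contribute `κ` each since `x i / s i ≤ κ²`, and so do `A`
and `Aᵀ`; the error of the inverse contributes `ε`. As `‖v‖² ≤ 0.0028 t₁` by centrality
(`vecNorm2_scaled_sq_le`), the quadratic term is at most `1.21 * 0.0028 * t₁`, which leaves ample room for the division by `t₂ ≥ 0.999 t₁`.
-/

open Matrix

/-- Frobenius norm of a real matrix. -/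
noncomputable def frobNorm {m n : Type*} [Fintype m] [Fintype n] (M : Matrix m n ℝ) : ℝ :=
  Real.sqrt (∑ i, ∑ j, (M i j) ^ 2)

/-- Euclidean norm of a real vector. -/
noncomputable def vecNorm2 {ι : Type*} [Fintype ι] (v : ι → ℝ) : ℝ :=
  Real.sqrt (∑ i, (v i) ^ 2)

/-! ### Euclidean and Frobenius norms -/

section Norms

variable {ι m : Type*} [Fintype ι] [Fintype m]

lemma vecNorm2_nonneg (v : ι → ℝ) : 0 ≤ vecNorm2 v := Real.sqrt_nonneg _

lemma vecNorm2_sq (v : ι → ℝ) : vecNorm2 v ^ 2 = ∑ i, v i ^ 2 :=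
  Real.sq_sqrt (Finset.sum_nonneg fun _ _ => sq_nonneg _)

lemma vecNorm2_le {v : ι → ℝ} {c : ℝ} (hc : 0 ≤ c) (h : ∑ i, v i ^ 2 ≤ c ^ 2) :
    vecNorm2 v ≤ c :=
  Real.sqrt_le_iff.mpr ⟨hc, h⟩

lemma vecNorm2_eq_norm (v : ι → ℝ) : vecNorm2 v = ‖WithLp.toLp 2 v‖ := by
  simp [vecNorm2, EuclideanSpace.norm_eq]

lemma vecNorm2_add_le (v w : ι → ℝ) : vecNorm2 (v + w) ≤ vecNorm2 v + vecNorm2 w := by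
  simpa only [vecNorm2_eq_norm, WithLp.toLp_add] using norm_add_le _ _

lemma vecNorm2_smul (c : ℝ) (v : ι → ℝ) : vecNorm2 (c • v) = |c| * vecNorm2 v := by
  simp only [vecNorm2_eq_norm, WithLp.toLp_smul, norm_smul, Real.norm_eq_abs]

lemma abs_le_vecNorm2 (v : ι → ℝ) (i : ι) : |v i| ≤ vecNorm2 v :=
  Real.abs_le_sqrt
    (Finset.single_le_sum (f := fun i => v i ^ 2) (fun _ _ => sq_nonneg _) (Finset.mem_univ i))

lemma vecNorm2_le_mul_of_abs_le {v w : ι → ℝ} {c : ℝ} (hc : 0 ≤ c)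
    (h : ∀ i, |v i| ≤ c * |w i|) : vecNorm2 v ≤ c * vecNorm2 w := by
  refine vecNorm2_le (mul_nonneg hc (vecNorm2_nonneg _)) ?_
  rw [mul_pow, vecNorm2_sq, Finset.mul_sum]
  refine Finset.sum_le_sum fun i _ => ?_
  have := pow_le_pow_left₀ (abs_nonneg _) (h i) 2
  rwa [mul_pow, sq_abs, sq_abs] at this

lemma vecNorm2_mul_le (v w : ι → ℝ) : vecNorm2 (v * w) ≤ vecNorm2 v * vecNorm2 w :=
  vecNorm2_le_mul_of_abs_le (vecNorm2_nonneg _) fun i => by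
    rw [Pi.mul_apply, abs_mul]
    exact mul_le_mul_of_nonneg_right (abs_le_vecNorm2 v i) (abs_nonneg _)

lemma frobNorm_nonneg (M : Matrix m ι ℝ) : 0 ≤ frobNorm M := Real.sqrt_nonneg _

lemma frobNorm_sq (M : Matrix m ι ℝ) : frobNorm M ^ 2 = ∑ i, ∑ j, M i j ^ 2 :=
  Real.sq_sqrt (Finset.sum_nonneg fun _ _ => Finset.sum_nonneg fun _ _ => sq_nonneg _)

lemma frobNorm_transpose (M : Matrix m ι ℝ) : frobNorm Mᵀ = frobNorm M := by
  unfold frobNorm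
  rw [Finset.sum_comm]
  rfl

lemma le_frobNorm (M : Matrix m ι ℝ) (i : m) (j : ι) : M i j ≤ frobNorm M := by
  refine (le_abs_self _).trans (Real.abs_le_sqrt ?_)
  exact (Finset.single_le_sum (f := fun j => M i j ^ 2) (fun _ _ => sq_nonneg _)
    (Finset.mem_univ j)).trans (Finset.single_le_sum (f := fun i => ∑ j, M i j ^ 2)
      (fun _ _ => Finset.sum_nonneg fun _ _ => sq_nonneg _) (Finset.mem_univ i))

/-- The Frobenius norm dominates the Euclidean operator norm. -/
lemma vecNorm2_mulVec_le (M : Matrix m ι ℝ) (v : ι → ℝ) :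
    vecNorm2 (M *ᵥ v) ≤ frobNorm M * vecNorm2 v := by
  refine vecNorm2_le (mul_nonneg (frobNorm_nonneg _) (vecNorm2_nonneg _)) ?_
  rw [mul_pow, frobNorm_sq, vecNorm2_sq, Finset.sum_mul]
  exact Finset.sum_le_sum fun i _ => Finset.sum_mul_sq_le_sq_mul_sq _ _ _

lemma vecNorm2_mulVec_le_of_le {M : Matrix m ι ℝ} {v : ι → ℝ} {c b : ℝ}
    (hM : frobNorm M ≤ c) (hv : vecNorm2 v ≤ b) : vecNorm2 (M *ᵥ v) ≤ c * b :=
  (vecNorm2_mulVec_le M v).trans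
    (mul_le_mul hM hv (vecNorm2_nonneg _) ((frobNorm_nonneg _).trans hM))

end Norms

/-! ### Orthogonal projection and centrality -/

/-- The orthogonal projection `B (BᵀB)⁻¹ Bᵀ` and its complement do not increase the Euclidean norm.
When `BᵀB` is singular, Mathlib's inverse, hence the product, is `0`,
and both bounds still hold. -/
lemma vecNorm2_proj_le {n d : ℕ} (B : Matrix (Fin n) (Fin d) ℝ) (v : Fin n → ℝ) :
    vecNorm2 ((B * (Bᵀ * B)⁻¹ * Bᵀ) *ᵥ v) ≤ vecNorm2 v ∧
      vecNorm2 (v - (B * (Bᵀ * B)⁻¹ * Bᵀ) *ᵥ v) ≤ vecNorm2 v := by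
  set P := B * (Bᵀ * B)⁻¹ * Bᵀ with hP
  have hinv : (Bᵀ * B)⁻¹ * (Bᵀ * B) * (Bᵀ * B)⁻¹ = (Bᵀ * B)⁻¹ := by
    by_cases h : IsUnit (Bᵀ * B).det
    · rw [Matrix.nonsing_inv_mul _ h, Matrix.one_mul]
    · simp [Matrix.nonsing_inv_apply_not_isUnit _ h]
  have hT : Pᵀ = P := by
    simp [hP, Matrix.transpose_mul, Matrix.transpose_nonsing_inv, Matrix.mul_assoc]
  have hPP : P * P = P := by
    calc P * P = B * ((Bᵀ * B)⁻¹ * (Bᵀ * B) * (Bᵀ * B)⁻¹) * Bᵀ := by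
          simp only [hP, Matrix.mul_assoc]
      _ = P := by rw [hinv]
  set w := P *ᵥ v with hw
  -- `⟪P v, P v⟫ = ⟪v, P v⟫`, from which both norms follow by Pythagoras.
  have hdot : w ⬝ᵥ w = v ⬝ᵥ w := by
    calc w ⬝ᵥ w = v ᵥ* Pᵀ ⬝ᵥ P *ᵥ v := by rw [Matrix.vecMul_transpose]
      _ = v ⬝ᵥ w := by
        rw [hT, ← Matrix.dotProduct_mulVec, Matrix.mulVec_mulVec, hPP]
  have hpyth : ∑ i, (v - w) i ^ 2 = ∑ i, v i ^ 2 - ∑ i, w i ^ 2 := by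
    have h1 : ∑ i, w i ^ 2 = ∑ i, v i * w i := by
      simpa only [dotProduct, ← sq] using hdot
    have h2 : ∑ i, (v - w) i ^ 2 = ∑ i, v i ^ 2 - 2 * ∑ i, v i * w i + ∑ i, w i ^ 2 := by
      rw [Finset.mul_sum, ← Finset.sum_sub_distrib, ← Finset.sum_add_distrib]
      exact Finset.sum_congr rfl fun i _ => by rw [Pi.sub_apply]; ring
    linarith
  have h1 : 0 ≤ ∑ i, (v - w) i ^ 2 := Finset.sum_nonneg fun _ _ => sq_nonneg _
  have h2 : 0 ≤ ∑ i, w i ^ 2 := Finset.sum_nonneg fun _ _ => sq_nonneg _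
  constructor
  · exact Real.sqrt_le_sqrt (by linarith)
  · exact Real.sqrt_le_sqrt (by linarith)

/-- If `μ` is `0.1`-central at `t`, then every `μ i` is at least `0.9 t`, and the vector with entries
`δμ i / √(μ i)`, where `δμ = -(μ - t 𝟙) / 2`, has squared norm at most `0.01 t / 3.6 ≤ 0.0028 t`. -/
lemma vecNorm2_scaled_sq_le {ι : Type*} [Fintype ι] {t : ℝ} (ht : 0 < t) {μ v : ι → ℝ}
    (hcent : vecNorm2 (fun i => (μ i - t) / t) ≤ 0.1)
    (hv : ∀ i, v i ^ 2 * μ i = (-(1 / 2 : ℝ) * (μ i - t)) ^ 2) :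
    vecNorm2 v ^ 2 ≤ 0.0028 * t := by
  set r : ι → ℝ := fun i => (μ i - t) / t with hr
  have hterm : ∀ i, v i ^ 2 ≤ 0.28 * t * r i ^ 2 := by
    intro i
    have hri : |r i| ≤ 0.1 := (abs_le_vecNorm2 r i).trans hcent
    have hlow := (abs_le.mp hri).1
    have hμ : μ i = t + t * r i := by simp only [hr]; field_simp; ring
    have hμ9 : 0.9 * t ≤ μ i := by rw [hμ]; nlinarith
    have h1 : v i ^ 2 * (0.9 * t) ≤ (0.25 * t * r i ^ 2) * t := by
      calc v i ^ 2 * (0.9 * t) ≤ v i ^ 2 * μ i := mul_le_mul_of_nonneg_left hμ9 (sq_nonneg _)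
        _ = (0.25 * t * r i ^ 2) * t := by rw [hv, hμ]; ring
    have h2 : v i ^ 2 * 0.9 ≤ 0.25 * t * r i ^ 2 :=
      le_of_mul_le_mul_right (by linarith) ht
    have h3 : 0 ≤ t * r i ^ 2 := by positivity
    linarith
  have hsum : ∑ i, r i ^ 2 ≤ 0.1 ^ 2 := by
    rw [← vecNorm2_sq]; exact pow_le_pow_left₀ (vecNorm2_nonneg _) hcent 2
  calc vecNorm2 v ^ 2 ≤ ∑ i, 0.28 * t * r i ^ 2 := by
        rw [vecNorm2_sq]; exact Finset.sum_le_sum fun i _ => hterm i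
    _ = 0.28 * t * ∑ i, r i ^ 2 := by rw [Finset.mul_sum]
    _ ≤ 0.28 * t * 0.1 ^ 2 := mul_le_mul_of_nonneg_left hsum (by positivity)
    _ = 0.0028 * t := by ring

/-! ### The interior point step -/

/-- Maintenance of centrality along one IPM step with an approximate inverse. -/
theorem ipm_centrality_approx_inverse
    {n d : ℕ} (hn : 10 ≤ n) (hd : 0 < d)
    (t₁ κ : ℝ) (ht₁ : 0 < t₁) (hκ : 1 ≤ κ)
    (x s : Fin n → ℝ) (hx : ∀ i, 0 < x i) (hs : ∀ i, 0 < s i)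
    (A : Matrix (Fin n) (Fin d) ℝ) (hA : IsUnit (Aᵀ * A).det)
    (X S : Matrix (Fin n) (Fin n) ℝ)
    (hX : X = Matrix.diagonal x) (hS : S = Matrix.diagonal s)
    (hXF : frobNorm X ≤ κ) (hXiF : frobNorm X⁻¹ ≤ κ)
    (hSF : frobNorm S ≤ κ) (hSiF : frobNorm S⁻¹ ≤ κ) (hAF : frobNorm A ≤ κ)
    (μ₁ δμ : Fin n → ℝ)
    (hμ₁ : μ₁ = x * s)
    (hδμ : δμ = fun i => -(1 / 2 : ℝ) * (μ₁ i - t₁))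
    (hcent : vecNorm2 (fun i => (μ₁ i - t₁) / t₁) ≤ 0.1)
    (ε : ℝ) (hε : 0 ≤ ε) (hκε : κ ^ 4 * ε ≤ 0.1)
    (Dinv : Matrix (Fin d) (Fin d) ℝ)
    (hDinv : frobNorm ((Aᵀ * X * S⁻¹ * A)⁻¹ - Dinv) ≤ ε)
    (Xh Xnh Sh Snh : Matrix (Fin n) (Fin n) ℝ)
    (hXh : Xh = Matrix.diagonal fun i => Real.sqrt (x i))
    (hXnh : Xnh = Matrix.diagonal fun i => (Real.sqrt (x i))⁻¹)
    (hSh : Sh = Matrix.diagonal fun i => Real.sqrt (s i))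
    (hSnh : Snh = Matrix.diagonal fun i => (Real.sqrt (s i))⁻¹)
    (Pt : Matrix (Fin n) (Fin n) ℝ)
    (hPt : Pt = Xh * Snh * A * Dinv * Aᵀ * Snh * Xh)
    (δx δs μ₂ : Fin n → ℝ) (t₂ : ℝ)
    (hδx : δx = (Xh * Snh * (1 - Pt) * Xnh * Snh) *ᵥ δμ)
    (hδs : δs = (Xnh * Sh * Pt * Xnh * Snh) *ᵥ δμ)
    (hμ₂ : μ₂ = (x + δx) * (s + δs))
    (ht₂ : t₂ = (1 - 1 / ((1000 : ℝ) * Real.sqrt n)) * t₁) :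
    vecNorm2 (fun i => (μ₂ i - t₂) / t₂) ≤ 0.1 := by
  set v : Fin n → ℝ := (Xnh * Snh) *ᵥ δμ with hv
  set p : Fin n → ℝ := Pt *ᵥ v with hp
  set q : Fin n → ℝ := v - p with hq
  have hvi : ∀ i, v i = (√(x i))⁻¹ * (√(s i))⁻¹ * δμ i := by
    intro i
    rw [hv, hXnh, hSnh, Matrix.diagonal_mul_diagonal, Matrix.mulVec_diagonal]
  have hδxi : ∀ i, δx i = √(x i) * (√(s i))⁻¹ * q i := by
    intro i
    have : δx = (Xh * Snh) *ᵥ q := by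
      rw [hδx, hq, hp, hv]
      simp only [← Matrix.mulVec_mulVec, Matrix.sub_mulVec, Matrix.one_mulVec]
    rw [this, hXh, hSnh, Matrix.diagonal_mul_diagonal, Matrix.mulVec_diagonal]
  have hδsi : ∀ i, δs i = (√(x i))⁻¹ * √(s i) * p i := by
    intro i
    have : δs = (Xnh * Sh) *ᵥ p := by
      rw [hδs, hp, hv]
      simp only [← Matrix.mulVec_mulVec]
    rw [this, hXnh, hSh, Matrix.diagonal_mul_diagonal, Matrix.mulVec_diagonal]
  have hV : vecNorm2 v ^ 2 ≤ 0.0028 * t₁ := by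
    refine vecNorm2_scaled_sq_le ht₁ hcent fun i => ?_
    have hx0 := (Real.sqrt_pos.mpr (hx i)).ne'
    have hs0 := (Real.sqrt_pos.mpr (hs i)).ne'
    have hμi : μ₁ i = √(x i) ^ 2 * √(s i) ^ 2 := by
      rw [Real.sq_sqrt (hx i).le, Real.sq_sqrt (hs i).le, hμ₁, Pi.mul_apply]
    have hδ : δμ i = -(1 / 2 : ℝ) * (μ₁ i - t₁) := by rw [hδμ]
    rw [← hδ, hvi, hμi]
    field_simp
  set G : Matrix (Fin n) (Fin n) ℝ :=
    Matrix.diagonal fun i => √(x i) * (√(s i))⁻¹ with hG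
  have hXS : Xh * Snh = G := by rw [hXh, hSnh, Matrix.diagonal_mul_diagonal]
  have hSX : Snh * Xh = G := by
    rw [hXh, hSnh, Matrix.diagonal_mul_diagonal, hG]
    simp only [mul_comm]
  have hSinv : S⁻¹ = Matrix.diagonal fun i => (s i)⁻¹ := by
    rw [hS]
    refine Matrix.inv_eq_right_inv ?_
    rw [Matrix.diagonal_mul_diagonal, ← Matrix.diagonal_one]
    exact congrArg _ (funext fun i => mul_inv_cancel₀ (hs i).ne')
  have hGG : G * G = X * S⁻¹ := by
    rw [hSinv, hX, hG, Matrix.diagonal_mul_diagonal, Matrix.diagonal_mul_diagonal]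
    refine congrArg _ (funext fun i => ?_)
    rw [mul_mul_mul_comm, ← mul_inv, Real.mul_self_sqrt (hx i).le, Real.mul_self_sqrt (hs i).le]
  have hGT : Gᵀ = G := Matrix.diagonal_transpose _
  have hκ0 : 0 ≤ κ := by linarith
  have hGle : ∀ (u : Fin n → ℝ) (b : ℝ), vecNorm2 u ≤ b → vecNorm2 (G *ᵥ u) ≤ κ * b := by
    intro u b hu
    refine le_trans (vecNorm2_le_mul_of_abs_le (w := u) hκ0 fun i => ?_)
      (mul_le_mul_of_nonneg_left hu hκ0)
    rw [hG, Matrix.mulVec_diagonal, abs_mul]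
    refine mul_le_mul_of_nonneg_right (abs_le_of_sq_le_sq ?_ hκ0) (abs_nonneg _)
    have h1 : x i ≤ κ := by simpa [hX] using (le_frobNorm X i i).trans hXF
    have h2 : (s i)⁻¹ ≤ κ := by simpa [hSinv] using (le_frobNorm S⁻¹ i i).trans hSiF
    rw [mul_pow, inv_pow, Real.sq_sqrt (hx i).le, Real.sq_sqrt (hs i).le, sq κ]
    exact mul_le_mul h1 h2 (inv_nonneg.mpr (hs i).le) hκ0
  set M : Matrix (Fin d) (Fin d) ℝ := Aᵀ * X * S⁻¹ * A with hM
  have hBB : (G * A)ᵀ * (G * A) = M := by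
    rw [Matrix.transpose_mul, hGT, hM, Matrix.mul_assoc Aᵀ X, ← hGG]
    simp only [Matrix.mul_assoc]
  obtain ⟨hP1, hP2⟩ := vecNorm2_proj_le (G * A) v
  rw [hBB] at hP1 hP2
  set w : Fin n → ℝ := (G * A * M⁻¹ * (G * A)ᵀ) *ᵥ v with hw
  set e : Fin n → ℝ := G *ᵥ (A *ᵥ ((M⁻¹ - Dinv) *ᵥ (Aᵀ *ᵥ (G *ᵥ v)))) with he
  have hpe : p = w + (-1 : ℝ) • e := by
    have hPt' : Pt = G * A * Dinv * Aᵀ * G := by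
      rw [hPt, hXS, Matrix.mul_assoc _ Snh Xh, hSX]
    rw [hp, hw, he, hPt', Matrix.transpose_mul, hGT]
    simp only [← Matrix.mulVec_mulVec, Matrix.sub_mulVec, Matrix.mulVec_sub]
    simp
  have hqe : q = (v - w) + e := by rw [hq, hpe, neg_one_smul]; abel
  have hV0 := vecNorm2_nonneg v
  have hE : vecNorm2 e ≤ 0.1 * vecNorm2 v := by
    have hAT : frobNorm Aᵀ ≤ κ := (frobNorm_transpose A).trans_le hAF
    have h := hGle _ _ (vecNorm2_mulVec_le_of_le hAF (vecNorm2_mulVec_le_of_le hDinv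
      (vecNorm2_mulVec_le_of_le hAT (hGle v _ le_rfl))))
    calc vecNorm2 e ≤ κ * (κ * (ε * (κ * (κ * vecNorm2 v)))) := h
      _ = κ ^ 4 * ε * vecNorm2 v := by ring
      _ ≤ 0.1 * vecNorm2 v := mul_le_mul_of_nonneg_right hκε hV0
  have hpV : vecNorm2 p ≤ 1.1 * vecNorm2 v := by
    have h := vecNorm2_add_le w ((-1 : ℝ) • e)
    rw [vecNorm2_smul, abs_neg, abs_one, one_mul, ← hpe] at h
    linarith
  have hqV : vecNorm2 q ≤ 1.1 * vecNorm2 v := by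
    have h := vecNorm2_add_le (v - w) e
    rw [← hqe] at h
    linarith
  have hqp : vecNorm2 (q * p) ≤ 0.0034 * t₁ := by
    calc vecNorm2 (q * p) ≤ vecNorm2 q * vecNorm2 p := vecNorm2_mul_le _ _
      _ ≤ (1.1 * vecNorm2 v) * (1.1 * vecNorm2 v) :=
        mul_le_mul hqV hpV (vecNorm2_nonneg _) (by positivity)
      _ = 1.21 * vecNorm2 v ^ 2 := by ring
      _ ≤ 0.0034 * t₁ := by linarith
  have hn1 : 1 ≤ √(n : ℝ) := by
    rw [Real.one_le_sqrt]; exact_mod_cast le_trans (by norm_num) hn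
  have hn0 : 0 < √(n : ℝ) := by linarith
  have ht₂_ge : 0.999 * t₁ ≤ t₂ := by
    have : 1 / (1000 * √(n : ℝ)) ≤ 0.001 := by
      rw [div_le_iff₀ (by positivity)]; linarith
    rw [ht₂]
    exact mul_le_mul_of_nonneg_right (by linarith) ht₁.le
  have ht₂0 : 0 < t₂ := by linarith
  -- The shift `t₁ - t₂` is spread over `n` coordinates, which is what the factor `1 / √n` pays for.
  have hshift : vecNorm2 (fun _ : Fin n => t₁ - t₂) ≤ 0.001 * t₁ := by
    refine vecNorm2_le (by positivity) (le_of_eq ?_)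
    have h1 : t₁ - t₂ = t₁ / (1000 * √(n : ℝ)) := by rw [ht₂]; ring
    rw [Finset.sum_const, Finset.card_univ, Fintype.card_fin, nsmul_eq_mul, h1, div_pow, mul_pow,
      Real.sq_sqrt (Nat.cast_nonneg n)]
    have : (n : ℝ) ≠ 0 := by
      have : 0 < n := by omega
      positivity
    field_simp
    norm_num
  have hsplit : (fun i => (μ₂ i - t₂) / t₂) =
      t₂⁻¹ • (((t₁ / 2) • (fun i => (μ₁ i - t₁) / t₁) + fun _ => t₁ - t₂) + q * p) := by
    funext i
    have hx0 := (Real.sqrt_pos.mpr (hx i)).ne'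
    have hs0 := (Real.sqrt_pos.mpr (hs i)).ne'
    have hδi : √(x i) * √(s i) * v i = -(1 / 2 : ℝ) * (μ₁ i - t₁) := by
      rw [hvi, hδμ]; field_simp
    have hqi : q i = v i - p i := rfl
    have hμ₂i : μ₂ i = μ₁ i + √(x i) * √(s i) * v i + q i * p i := by
      have hxi := Real.sq_sqrt (hx i).le
      have hsi := Real.sq_sqrt (hs i).le
      rw [hμ₂, hμ₁]
      simp only [Pi.mul_apply, Pi.add_apply, hδxi, hδsi]
      have e1 : x i * ((√(x i))⁻¹ * √(s i) * p i) = √(x i) * √(s i) * p i := by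
        nth_rewrite 1 [← hxi]; field_simp
      have e2 : √(x i) * (√(s i))⁻¹ * q i * s i = √(x i) * √(s i) * q i := by
        nth_rewrite 2 [← hsi]; field_simp
      have e3 : √(x i) * (√(s i))⁻¹ * q i * ((√(x i))⁻¹ * √(s i) * p i) = q i * p i := by
        field_simp
      rw [add_mul, mul_add, mul_add, e1, e2, e3, hqi]
      ring
    simp only [Pi.smul_apply, Pi.add_apply, Pi.mul_apply, smul_eq_mul]
    rw [hμ₂i, hδi]
    field_simp
    ring
  rw [hsplit, vecNorm2_smul, abs_of_pos (inv_pos.mpr ht₂0), inv_mul_le_iff₀ ht₂0]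
  have h1 := vecNorm2_add_le
    ((t₁ / 2) • (fun i => (μ₁ i - t₁) / t₁) + fun _ : Fin n => t₁ - t₂) (q * p)
  have h2 := vecNorm2_add_le ((t₁ / 2) • (fun i => (μ₁ i - t₁) / t₁)) (fun _ : Fin n => t₁ - t₂)
  rw [vecNorm2_smul, abs_of_pos (by positivity : 0 < t₁ / 2)] at h2
  have h3 := mul_le_mul_of_nonneg_left hcent (by positivity : 0 ≤ t₁ / 2)
  linarith
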